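/- arXiv:math/0410116 — 2 statements merged into one kernel-verified Lean document; each statement's English description precedes it below -/
import Mathlib

section
/- Let ν be a probability measure on E equivalent to P_Y. Then there exists a unique probability measure Q on Ω such that Q belongs to the pinning class R_Y(P) and the law of Y under Q equals ν; it is given explicitly by Q = the measure with density (dν/dP_Y) ∘ Y with respect to P, equivalently Q(A) = ∫_E (κ_P y)(A) dν(y) for all measurable A. (This is the existence and uniqueness statement in the proof of Proposition 9.) -/
open MeasureTheory ProbabilityTheory

/-- `κ` is a regular conditional distribution of the identity given `Y` under `P`. -/
def IsCondDistribGiven {Ω E : Type*} [MeasurableSpace Ω] [MeasurableSpace E]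
    (P : Measure Ω) (Y : Ω → E) (κ : Kernel E Ω) : Prop :=
  ∀ F : Ω → ℝ, Measurable F → (∃ C, ∀ ω, |F ω| ≤ C) →
  ∀ g : E → ℝ, Measurable g → (∃ C, ∀ y, |g y| ≤ C) →
    ∫ ω, F ω * g (Y ω) ∂P = ∫ y, g y * ∫ ω, F ω ∂(κ y) ∂(P.map Y)

/-- `Q` belongs to the pinning class `R_Y(P)`. -/
def InPinningClass {Ω E : Type*} [MeasurableSpace Ω] [MeasurableSpace E]
    (P : Measure Ω) (Y : Ω → E) (κP : Kernel E Ω) (Q : Measure Ω) : Prop :=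
  Q ≪ P ∧ P ≪ Q ∧
    ∃ κQ : Kernel E Ω, IsMarkovKernel κQ ∧ IsCondDistribGiven Q Y κQ ∧
      ∀ᵐ y ∂(P.map Y), κQ y = κP y

/-!
A finite measure `Q` has `κ` as conditional distribution given `Y` exactly when the law of `(Y, id)`
under `Q` is `Q.map Y ⊗ₘ κ`. Taking the second marginal, `Q = κ ∘ₘ Q.map Y`, so that the kernel and
the law of `Y` together determine `Q`. For existence, reweighting `P` by a density that depends on
`ω` only through `Y ω` changes the law of `Y` but not the conditional distribution given `Y`, and
`dν/d(P.map Y)` is the weight that turns `P.map Y` into `ν`.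
-/

open scoped ENNReal

section HasCondDistrib

variable {Ω 𝓧 𝓨 : Type*} [MeasurableSpace Ω] [MeasurableSpace 𝓧] [MeasurableSpace 𝓨]

theorem absolutelyContinuous_map_of_aemeasurable {μ ν : Measure Ω} (h : μ ≪ ν) {X : Ω → 𝓧}
    (hX : AEMeasurable X ν) : μ.map X ≪ ν.map X := by
  refine .mk fun s hs hs_zero ↦ ?_
  rw [Measure.map_apply_of_aemeasurable hX hs] at hs_zero
  rw [Measure.map_apply_of_aemeasurable (hX.mono_ac h) hs]
  exact h hs_zero

theorem map_withDensity_comp {μ : Measure Ω} {X : Ω → 𝓧} (hX : AEMeasurable X μ)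
    {f : 𝓧 → ℝ≥0∞} (hf : Measurable f) :
    (μ.withDensity fun ω ↦ f (X ω)).map X = (μ.map X).withDensity f := by
  ext s hs
  rw [Measure.map_apply_of_aemeasurable (hX.mono_ac (withDensity_absolutelyContinuous _ _)) hs,
    withDensity_apply₀ _ (hX.nullMeasurable hs), withDensity_apply _ hs,
    Measure.restrict_map_of_aemeasurable hX hs, lintegral_map' hf.aemeasurable hX.restrict]

theorem compProd_withDensity_left {μ : Measure 𝓧} [SFinite μ] {κ : Kernel 𝓧 𝓨}
    [IsSFiniteKernel κ] {f : 𝓧 → ℝ≥0∞} (hf : Measurable f) :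
    μ.withDensity f ⊗ₘ κ = (μ ⊗ₘ κ).withDensity fun p ↦ f p.1 := by
  refine Measure.ext_of_lintegral _ fun g hg ↦ ?_
  rw [Measure.lintegral_compProd hg,
    lintegral_withDensity_eq_lintegral_mul _ hf (by fun_prop),
    lintegral_withDensity_eq_lintegral_mul _ (by fun_prop) hg,
    Measure.lintegral_compProd (by fun_prop)]
  refine lintegral_congr fun x ↦ ?_
  simp only [Pi.mul_apply]
  rw [lintegral_const_mul _ (by fun_prop)]

variable {P : Measure Ω} [SFinite P] {X : Ω → 𝓧} {Z : Ω → 𝓨} {κ : Kernel 𝓧 𝓨} [IsSFiniteKernel κ]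

theorem hasCondDistrib_withDensity_comp (h : HasCondDistrib Z X κ P) {f : 𝓧 → ℝ≥0∞}
    (hf : Measurable f) : HasCondDistrib Z X κ (P.withDensity fun ω ↦ f (X ω)) where
  aemeasurable := h.aemeasurable.mono_ac (withDensity_absolutelyContinuous _ _)
  map_eq := calc
    (P.withDensity fun ω ↦ f (X ω)).map (fun ω ↦ (X ω, Z ω))
    _ = (P.map fun ω ↦ (X ω, Z ω)).withDensity fun p ↦ f p.1 :=
      map_withDensity_comp h.aemeasurable (f := fun p ↦ f p.1) (by fun_prop)
    _ = (P.map X).withDensity f ⊗ₘ κ := by rw [h.map_eq, compProd_withDensity_left hf]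
    _ = (P.withDensity fun ω ↦ f (X ω)).map X ⊗ₘ κ := by
      rw [map_withDensity_comp h.aemeasurable_fst hf]

theorem map_eq_comp_map_of_hasCondDistrib (h : HasCondDistrib Z X κ P) :
    P.map Z = κ ∘ₘ P.map X := by
  rw [← Measure.snd_compProd, ← h.map_eq, Measure.snd_map_prodMk₀ h.aemeasurable_fst]

end HasCondDistrib

section Pinning

variable {Ω E : Type*} [MeasurableSpace Ω] [MeasurableSpace E] {P Q : Measure Ω} {Y : Ω → E}
  {κ : Kernel E Ω}

theorem isCondDistribGiven_iff_forall_integral_eq [IsFiniteMeasure P] [IsFiniteKernel κ]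
    (hY : AEMeasurable Y P) :
    IsCondDistribGiven P Y κ ↔
      ∀ F : Ω → ℝ, Measurable F → (∃ C, ∀ ω, |F ω| ≤ C) →
      ∀ g : E → ℝ, Measurable g → (∃ C, ∀ y, |g y| ≤ C) →
        ∫ p, g p.1 * F p.2 ∂(P.map fun ω ↦ (Y ω, id ω)) =
          ∫ p, g p.1 * F p.2 ∂(P.map Y ⊗ₘ κ) := by
  refine forall₃_congr fun F hF ⟨C, hC⟩ ↦ forall₃_congr fun g hg ⟨D, hD⟩ ↦ ?_
  have hgF : Measurable fun p : E × Ω ↦ g p.1 * F p.2 := by fun_prop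
  have h_int : Integrable (fun p : E × Ω ↦ g p.1 * F p.2) (P.map Y ⊗ₘ κ) :=
    .of_bound hgF.aestronglyMeasurable (D * C) <| .of_forall fun p ↦ by
      rw [norm_mul]
      exact mul_le_mul (hD _) (hC _) (norm_nonneg _) ((abs_nonneg _).trans (hD p.1))
  rw [integral_map (hY.prodMk aemeasurable_id) hgF.aestronglyMeasurable,
    Measure.integral_compProd h_int]
  simp only [integral_const_mul, mul_comm (F _), id]

theorem isCondDistribGiven_iff_hasCondDistrib [IsFiniteMeasure P] [IsFiniteKernel κ]
    (hY : AEMeasurable Y P) : IsCondDistribGiven P Y κ ↔ HasCondDistrib id Y κ P := by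
  rw [isCondDistribGiven_iff_forall_integral_eq hY]
  refine ⟨fun h ↦ ⟨hY.prodMk aemeasurable_id, Measure.ext_prod fun {s t} hs ht ↦ ?_⟩,
    fun h _ _ _ _ _ _ ↦ by rw [h.map_eq]⟩
  have h_rect := h
    (t.indicator 1) (measurable_one.indicator ht) ⟨1, fun ω ↦ by
      simpa using norm_indicator_le_norm_self (s := t) (1 : Ω → ℝ) ω⟩
    (s.indicator 1) (measurable_one.indicator hs) ⟨1, fun y ↦ by
      simpa using norm_indicator_le_norm_self (s := s) (1 : E → ℝ) y⟩
  have h_prod : (fun p : E × Ω ↦ s.indicator (1 : E → ℝ) p.1 * t.indicator (1 : Ω → ℝ) p.2) =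
      (s ×ˢ t).indicator 1 := by
    ext p
    exact Set.indicator_prod_one.symm
  rwa [h_prod, integral_indicator_one (hs.prod ht), integral_indicator_one (hs.prod ht),
    measureReal_eq_measureReal_iff] at h_rect

namespace InPinningClass

theorem hasCondDistrib [IsFiniteMeasure Q] [IsSFiniteKernel κ] (hY : AEMeasurable Y P)
    (hQ : InPinningClass P Y κ Q) : HasCondDistrib id Y κ Q := by
  obtain ⟨hQP, -, κQ, _, hκQ, hκQ_eq⟩ := hQ
  have h := (isCondDistribGiven_iff_hasCondDistrib (hY.mono_ac hQP)).1 hκQ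
  have hκQ_ae : κQ =ᵐ[Q.map Y] κ := (absolutelyContinuous_map_of_aemeasurable hQP hY).ae_le hκQ_eq
  exact ⟨h.aemeasurable, h.map_eq.trans (Measure.compProd_congr hκQ_ae)⟩

theorem eq_comp_map [IsFiniteMeasure Q] [IsSFiniteKernel κ] (hY : AEMeasurable Y P)
    (hQ : InPinningClass P Y κ Q) : Q = κ ∘ₘ Q.map Y := by
  simpa only [Measure.map_id] using map_eq_comp_map_of_hasCondDistrib (hQ.hasCondDistrib hY)

theorem withDensity_comp [IsFiniteMeasure P] [IsMarkovKernel κ] (hY : AEMeasurable Y P)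
    (hκ : IsCondDistribGiven P Y κ) {f : E → ℝ≥0∞} (hf : Measurable f)
    (hf_pos : ∀ᵐ y ∂P.map Y, f y ≠ 0) (hf_int : ∫⁻ y, f y ∂P.map Y ≠ ∞) :
    InPinningClass P Y κ (P.withDensity fun ω ↦ f (Y ω)) := by
  have hQP : P.withDensity (fun ω ↦ f (Y ω)) ≪ P := withDensity_absolutelyContinuous _ _
  have : IsFiniteMeasure (P.withDensity fun ω ↦ f (Y ω)) :=
    isFiniteMeasure_withDensity (by rwa [← lintegral_map' hf.aemeasurable hY])
  exact ⟨hQP,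
    withDensity_absolutelyContinuous' (hf.comp_aemeasurable hY) (ae_of_ae_map hY hf_pos),
    κ, ‹_›, (isCondDistribGiven_iff_hasCondDistrib (hY.mono_ac hQP)).2 <|
      hasCondDistrib_withDensity_comp ((isCondDistribGiven_iff_hasCondDistrib hY).1 hκ) hf,
    .of_forall fun _ ↦ rfl⟩

end InPinningClass

theorem exists_unique_pinning_with_law_general [IsFiniteMeasure P] [IsMarkovKernel κ]
    (hY : AEMeasurable Y P) (hκ : IsCondDistribGiven P Y κ) {ν : Measure E} [IsFiniteMeasure ν]
    (hν₁ : ν ≪ P.map Y) (hν₂ : P.map Y ≪ ν) :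
    (∃! Q : Measure Ω, InPinningClass P Y κ Q ∧ Q.map Y = ν) ∧
    ∀ Q : Measure Ω, InPinningClass P Y κ Q → Q.map Y = ν →
      Q = P.withDensity (fun ω ↦ ν.rnDeriv (P.map Y) (Y ω)) ∧
      ∀ A : Set Ω, MeasurableSet A → Q A = ∫⁻ y, κ y A ∂ν := by
  have h_eq_comp {Q : Measure Ω} (hQ : InPinningClass P Y κ Q) (hQν : Q.map Y = ν) :
      Q = κ ∘ₘ ν := by
    subst hQν
    have := Measure.isFiniteMeasure_of_map (hY.mono_ac hQ.1)
    exact hQ.eq_comp_map hY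
  set Q₀ : Measure Ω := P.withDensity fun ω ↦ ν.rnDeriv (P.map Y) (Y ω)
  have hQ₀ : InPinningClass P Y κ Q₀ := .withDensity_comp hY hκ (Measure.measurable_rnDeriv _ _)
    ((Measure.rnDeriv_pos' hν₂).mono fun _ h ↦ h.ne') (Measure.lintegral_rnDeriv_lt_top _ _).ne
  have hQ₀_law : Q₀.map Y = ν := by
    rw [map_withDensity_comp hY (Measure.measurable_rnDeriv _ _),
      Measure.withDensity_rnDeriv_eq _ _ hν₁]
  have h_unique {Q : Measure Ω} (hQ : InPinningClass P Y κ Q) (hQν : Q.map Y = ν) : Q = Q₀ :=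
    (h_eq_comp hQ hQν).trans (h_eq_comp hQ₀ hQ₀_law).symm
  refine ⟨⟨Q₀, ⟨hQ₀, hQ₀_law⟩, fun Q hQ ↦ h_unique hQ.1 hQ.2⟩,
    fun Q hQ hQν ↦ ⟨h_unique hQ hQν, fun A hA ↦ ?_⟩⟩
  rw [h_eq_comp hQ hQν, Measure.bind_apply hA κ.aemeasurable]

end Pinning

theorem exists_unique_pinning_with_law {Ω E : Type*}
    [MeasurableSpace Ω] [StandardBorelSpace Ω]
    [MeasurableSpace E] [StandardBorelSpace E]
    (P : Measure Ω) [IsProbabilityMeasure P]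
    (Y : Ω → E) (hY : Measurable Y)
    (κP : Kernel E Ω) [IsMarkovKernel κP]
    (hκP : IsCondDistribGiven P Y κP)
    (ν : Measure E) [IsProbabilityMeasure ν]
    (hν₁ : ν ≪ P.map Y) (hν₂ : P.map Y ≪ ν) :
    (∃! Q : Measure Ω, IsProbabilityMeasure Q ∧ InPinningClass P Y κP Q ∧ Q.map Y = ν) ∧
    ∀ Q : Measure Ω, IsProbabilityMeasure Q → InPinningClass P Y κP Q → Q.map Y = ν →
      Q = P.withDensity (fun ω => ν.rnDeriv (P.map Y) (Y ω)) ∧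
      ∀ A : Set Ω, MeasurableSet A → Q A = ∫⁻ y, κP y A ∂ν := by
  obtain ⟨⟨Q, ⟨hQ, rfl⟩, h_unique⟩, h⟩ :=
    exists_unique_pinning_with_law_general hY.aemeasurable hκP hν₁ hν₂
  exact ⟨⟨Q, ⟨Measure.isProbabilityMeasure_of_map Y, hQ, rfl⟩, fun Q' hQ' ↦ h_unique Q' hQ'.2⟩,
    fun Q' _ ↦ h Q'⟩
end

section
/- Let Q belong to the pinning class R_Y(P), and let Z : Ω → S be a measurable map into a measurable space S such that Z and Y are independent under P. Then the law of Z under Q equals the law of Z under P, i.e. Q ∘ Z⁻¹ = P ∘ Z⁻¹. (This is the key step in the proof of Proposition 10: Q and P coincide on the events which are P-independent of Y.) -/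
open MeasureTheory ProbabilityTheory

/-!
If `A` is independent of `Y` under `P`, then `κ y A = P A` for almost every `y`: integrated over any
measurable set of values of `Y`, both sides give the same result. A measure `Q` in the pinning class
is the mixture of the same kernel `κ` by another law of `Y`, absolutely continuous with respect to
the law under `P`, and averaging the constant `P A` against any probability measure returns `P A`.
-/

lemma exists_abs_indicator_one_le {α : Type*} (s : Set α) :
    ∃ K : ℝ, ∀ x, |s.indicator (1 : α → ℝ) x| ≤ K :=
  ⟨1, fun x ↦ by simpa using norm_indicator_le_norm_self (s := s) (1 : α → ℝ) x⟩

namespace IsCondDistribGiven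

variable {Ω E : Type*} [MeasurableSpace Ω] [MeasurableSpace E]
  {P Q : Measure Ω} {Y : Ω → E} {κ η : Kernel E Ω} {A : Set Ω}

lemma congr_ae (h : IsCondDistribGiven P Y κ) (hκη : ∀ᵐ y ∂(P.map Y), κ y = η y) :
    IsCondDistribGiven P Y η := by
  intro F hF hF_bdd g hg hg_bdd
  rw [h F hF hF_bdd g hg hg_bdd]
  refine integral_congr_ae ?_
  filter_upwards [hκη] with y hy
  rw [hy]

lemma measureReal_inter_preimage (h : IsCondDistribGiven P Y κ) (hY : Measurable Y)
    (hA : MeasurableSet A) {C : Set E} (hC : MeasurableSet C) :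
    P.real (A ∩ Y ⁻¹' C) = ∫ y in C, (κ y).real A ∂(P.map Y) := by
  calc P.real (A ∩ Y ⁻¹' C)
      = ∫ ω, A.indicator 1 ω * C.indicator 1 (Y ω) ∂P := by
        rw [← integral_indicator_one (hA.inter (hY hC)), Set.inter_indicator_one]
        rfl
    _ = ∫ y, C.indicator 1 y * ∫ ω, A.indicator 1 ω ∂(κ y) ∂(P.map Y) :=
        h _ (measurable_one.indicator hA) (exists_abs_indicator_one_le A)
          _ (measurable_one.indicator hC) (exists_abs_indicator_one_le C)
    _ = ∫ y in C, (κ y).real A ∂(P.map Y) := by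
        simp only [integral_indicator_one hA, ← integral_indicator hC]
        simp only [Set.indicator, Pi.one_apply, ite_mul, one_mul, zero_mul]

lemma measureReal_eq_integral (h : IsCondDistribGiven P Y κ) (hA : MeasurableSet A) :
    P.real A = ∫ y, (κ y).real A ∂(P.map Y) := by
  simpa only [Pi.one_apply, mul_one, one_mul, integral_indicator_one hA]
    using h _ (measurable_one.indicator hA) (exists_abs_indicator_one_le A)
      1 measurable_one ⟨1, fun _ ↦ abs_one.le⟩

lemma ae_measureReal_eq_of_indepSet [IsFiniteMeasure P] [IsFiniteKernel κ]
    (h : IsCondDistribGiven P Y κ) (hY : Measurable Y) (hA : MeasurableSet A)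
    (hindep : ∀ C, MeasurableSet C → IndepSet A (Y ⁻¹' C) P) :
    ∀ᵐ y ∂(P.map Y), (κ y).real A = P.real A := by
  refine Integrable.ae_eq_of_forall_setIntegral_eq _ _ (Kernel.IsFiniteKernel.integrable _ κ hA)
    (integrable_const _) fun C hC _ ↦ ?_
  calc ∫ y in C, (κ y).real A ∂(P.map Y)
      = P.real (A ∩ Y ⁻¹' C) := (h.measureReal_inter_preimage hY hA hC).symm
    _ = P.real (Y ⁻¹' C) * P.real A := by
        simp only [measureReal_def, (hindep C hC).measure_inter_eq_mul, ENNReal.toReal_mul,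
          mul_comm]
    _ = ∫ _ in C, P.real A ∂(P.map Y) := by
        rw [setIntegral_const, map_measureReal_apply hY hC, smul_eq_mul]

lemma measureReal_eq_of_indepSet [IsFiniteMeasure P] [IsProbabilityMeasure Q] [IsFiniteKernel κ]
    (hP : IsCondDistribGiven P Y κ) (hQ : IsCondDistribGiven Q Y κ) (hY : Measurable Y)
    (hac : Q.map Y ≪ P.map Y) (hA : MeasurableSet A)
    (hindep : ∀ C, MeasurableSet C → IndepSet A (Y ⁻¹' C) P) :
    Q.real A = P.real A := by
  have : IsProbabilityMeasure (Q.map Y) := Measure.isProbabilityMeasure_map hY.aemeasurable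
  calc Q.real A
      = ∫ y, (κ y).real A ∂(Q.map Y) := hQ.measureReal_eq_integral hA
    _ = ∫ _, P.real A ∂(Q.map Y) :=
        integral_congr_ae (hac.ae_le (hP.ae_measureReal_eq_of_indepSet hY hA hindep))
    _ = P.real A := by rw [integral_const, probReal_univ, one_smul]

end IsCondDistribGiven

lemma InPinningClass.isCondDistribGiven {Ω E : Type*} [MeasurableSpace Ω] [MeasurableSpace E]
    {P Q : Measure Ω} {Y : Ω → E} {κ : Kernel E Ω} (hQ : InPinningClass P Y κ Q)
    (hY : Measurable Y) : IsCondDistribGiven Q Y κ := by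
  obtain ⟨hQP, -, κQ, -, hκQ, hae⟩ := hQ
  exact hκQ.congr_ae ((hQP.map hY).ae_le hae)

theorem pinning_preserves_law_of_independent_general {Ω E S : Type*}
    [MeasurableSpace Ω] [MeasurableSpace E] [MeasurableSpace S]
    {P Q : Measure Ω} [IsProbabilityMeasure P] [IsProbabilityMeasure Q]
    {Y : Ω → E} (hY : Measurable Y) {κ : Kernel E Ω} [IsFiniteKernel κ]
    (hP : IsCondDistribGiven P Y κ) (hQ : IsCondDistribGiven Q Y κ)
    (hac : Q.map Y ≪ P.map Y) {Z : Ω → S} (hZ : Measurable Z) (hindep : IndepFun Z Y P) :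
    Q.map Z = P.map Z := by
  ext B hB
  rw [← measureReal_eq_measureReal_iff, map_measureReal_apply hZ hB, map_measureReal_apply hZ hB]
  exact hP.measureReal_eq_of_indepSet hQ hY hac (hZ hB) fun C hC ↦
    (indepFun_iff_indepSet_preimage hZ hY).1 hindep B C hB hC

theorem pinning_preserves_law_of_independent {Ω E S : Type*}
    [MeasurableSpace Ω] [StandardBorelSpace Ω]
    [MeasurableSpace E] [StandardBorelSpace E]
    [MeasurableSpace S]
    (P : Measure Ω) [IsProbabilityMeasure P]
    (Y : Ω → E) (hY : Measurable Y)
    (κP : Kernel E Ω) [IsMarkovKernel κP]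
    (hκP : IsCondDistribGiven P Y κP)
    (Q : Measure Ω) [IsProbabilityMeasure Q]
    (hQ : InPinningClass P Y κP Q)
    (Z : Ω → S) (hZ : Measurable Z)
    (hindep : IndepFun Z Y P) :
    Q.map Z = P.map Z := by
  exact pinning_preserves_law_of_independent_general hY hκP (hQ.isCondDistribGiven hY)
    (hQ.1.map hY) hZ hindep
end
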